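/- Let 0 ≤ γ ≤ 1, let B₀ : [−1,1] → ℝ be measurable with 0 ≤ B₀(c) ≤ C_B·|c|, and let ℓ > 4. Define the gain and loss parts of the Boltzmann collision operator by Q₊(F₁,F₂)(v) := ∫_{ℝ³} ∫_{S²} |v − v_*|^γ B₀(cos θ) F₁(v_*') F₂(v') dω dv_* and Q₋(F₁,F₂)(v) := ∫_{ℝ³} ∫_{S²} |v − v_*|^γ B₀(cos θ) F₁(v_*) F₂(v) dω dv_*, where v' = v + [(v_* − v)·ω]ω, v_*' = v_* − [(v_* − v)·ω]ω and cos θ = ω·(v − v_*)/|v − v_*|. Then there exists a constant C > 0, depending only on γ, ℓ and C_B, such that for all measurable F₁, F₂ : ℝ³ → ℝ with ‖w^ℓ F₁‖_{L∞} < ∞ and ‖w^ℓ F₂‖_{L∞} < ∞ and every v ∈ ℝ³: |Q₊(F₁,F₂)(v)| + |Q₋(F₁,F₂)(v)| ≤ C·(1 + |v|)^γ·(1 + |v|²)^{−ℓ/2}·‖w^ℓ F₁‖_{L∞}·‖w^ℓ F₂‖_{L∞}. -/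

import Mathlib

open MeasureTheory Metric
open scoped RealInnerProductSpace

/-!
On the product of the two weights, integrate over `v_*` first with `ω` fixed. Splitting
`v_* - v` along `K = ℝω` and `Kᗮ`, the outgoing velocity `v' = v + P_K (v_* - v)` depends only on
the `K` component and `v_*' = v + P_Kᗮ (v_* - v)` only on the other one, so the integral factors
into one over `K` and one over `Kᗮ`. Scaling evaluates these as powers of `1 + |P_Kᗮ v|²` and
`1 + |P_K v|²`. One of these two brackets is at least half of `1 + |v|²`, and averaging the power
of the other one over the unit sphere supplies exactly the decay in `v` that is still missing.
-/

open Module (finrank)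
open scoped ENNReal NNReal

theorem exists_norm_eq_one_norm_smul_eq {E : Type*} [NormedAddCommGroup E] [NormedSpace ℝ E]
    [Nontrivial E] (v : E) :
    ∃ e : E, ‖e‖ = 1 ∧ ‖v‖ • e = v := by
  obtain rfl | hv := eq_or_ne v 0
  · obtain ⟨e, he⟩ := exists_norm_eq E zero_le_one
    exact ⟨e, he, by simp⟩
  · exact ⟨‖v‖⁻¹ • v, norm_smul_inv_norm hv, smul_inv_smul₀ (norm_ne_zero_iff.2 hv) v⟩

section Projection

variable {E : Type*} [NormedAddCommGroup E] [InnerProductSpace ℝ E]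

theorem norm_starProjection_span_singleton_comm {e ω : E} (he : ‖e‖ = 1) (hω : ‖ω‖ = 1) :
    ‖(ℝ ∙ ω).starProjection e‖ = ‖(ℝ ∙ e).starProjection ω‖ := by
  simp only [Submodule.starProjection_unit_singleton ℝ, he, hω, norm_smul, real_inner_comm]

theorem norm_starProjection_orthogonal_span_singleton_comm {e ω : E}
    (he : ‖e‖ = 1) (hω : ‖ω‖ = 1) :
    ‖(ℝ ∙ ω)ᗮ.starProjection e‖ = ‖(ℝ ∙ e)ᗮ.starProjection ω‖ := by
  have h₁ := (ℝ ∙ ω).norm_sq_eq_add_norm_sq_starProjection e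
  have h₂ := (ℝ ∙ e).norm_sq_eq_add_norm_sq_starProjection ω
  rw [he, norm_starProjection_span_singleton_comm he hω] at h₁
  rw [hω] at h₂
  rw [← sq_eq_sq₀ (norm_nonneg _) (norm_nonneg _)]
  linarith

theorem exists_norm_starProjection_span_singleton_eq [Nontrivial E] (v : E) :
    ∃ e : E, ‖e‖ = 1 ∧ ∀ ω : E, ‖ω‖ = 1 →
      ‖(ℝ ∙ ω).starProjection v‖ = ‖v‖ * ‖(ℝ ∙ e).starProjection ω‖ ∧
      ‖(ℝ ∙ ω)ᗮ.starProjection v‖ = ‖v‖ * ‖(ℝ ∙ e)ᗮ.starProjection ω‖ := by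
  obtain ⟨e, he, hv⟩ := exists_norm_eq_one_norm_smul_eq v
  have hproj (K : Submodule ℝ E) [K.HasOrthogonalProjection] :
      ‖K.starProjection v‖ = ‖v‖ * ‖K.starProjection e‖ := by
    conv_lhs => rw [← hv, map_smul, norm_smul, norm_norm]
  refine ⟨e, he, fun ω hω ↦ ⟨?_, ?_⟩⟩
  · rw [hproj, norm_starProjection_span_singleton_comm he hω]
  · rw [hproj, norm_starProjection_orthogonal_span_singleton_comm he hω]

theorem norm_add_starProjection_sq (K : Submodule ℝ E) [K.HasOrthogonalProjection] (v u : E) :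
    ‖v + K.starProjection u‖ ^ 2 =
      ‖Kᗮ.starProjection v‖ ^ 2 + ‖K.starProjection (u + v)‖ ^ 2 := by
  have hu : K.starProjection u ∈ K := K.starProjection_apply_mem u
  rw [K.norm_sq_eq_add_norm_sq_starProjection, map_add, map_add, map_add,
    K.starProjection_eq_self_iff.2 hu, Submodule.starProjection_orthogonal_apply_eq_zero hu,
    add_zero, add_comm (K.starProjection v), add_comm (‖_‖ ^ 2)]

theorem norm_add_starProjection_orthogonal_sq (K : Submodule ℝ E) [K.HasOrthogonalProjection]
    (v u : E) :
    ‖v + Kᗮ.starProjection u‖ ^ 2 =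
      ‖K.starProjection v‖ ^ 2 + ‖Kᗮ.starProjection (u + v)‖ ^ 2 := by
  simpa using norm_add_starProjection_sq Kᗮ v u

variable [FiniteDimensional ℝ E]

theorem finrank_orthogonal_span_singleton_eq_sub_one {e : E} (he : e ≠ 0) :
    finrank ℝ (ℝ ∙ e)ᗮ = finrank ℝ E - 1 := by
  rw [← (ℝ ∙ e).finrank_add_finrank_orthogonal, finrank_span_singleton he, add_tsub_cancel_left]

variable [MeasurableSpace E] [BorelSpace E]

theorem lintegral_mul_orthogonalProjectionOnto (K : Submodule ℝ E) {f : K → ℝ≥0∞} {g : Kᗮ → ℝ≥0∞}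
    (hf : Measurable f) (hg : Measurable g) :
    ∫⁻ x : E, f (K.orthogonalProjectionOnto x) * g (Kᗮ.orthogonalProjectionOnto x) =
      (∫⁻ y, f y) * ∫⁻ z, g z := by
  have hK : MeasurePreserving fun x : E ↦
      (K.orthogonalProjectionOnto x, Kᗮ.orthogonalProjectionOnto x) := by
    simpa [Function.comp_def] using
      (WithLp.volume_preserving_ofLp K Kᗮ).comp K.orthogonalDecomposition.measurePreserving
  rw [← lintegral_prod_mul hf.aemeasurable hg.aemeasurable]
  exact hK.lintegral_comp (f := fun p ↦ f p.1 * g p.2) (by fun_prop)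

theorem volume_ball_eq_euclideanSpace :
    volume (ball (0 : E) 1) = volume (ball (0 : EuclideanSpace ℝ (Fin (finrank ℝ E))) 1) := by
  let b := (stdOrthonormalBasis ℝ E).repr
  rw [← b.measurePreserving.measure_preimage measurableSet_ball.nullMeasurableSet,
    b.preimage_ball, map_zero]

end Projection

section Haar

variable {E : Type*} [NormedAddCommGroup E] [NormedSpace ℝ E] [MeasurableSpace E] [BorelSpace E]
  (μ : Measure E)

theorem lintegral_toSphere_eq_setLIntegral_ball {g : E → ℝ≥0∞} (hg : Measurable g) :
    ∫⁻ ω, g ω ∂μ.toSphere = finrank ℝ E * ∫⁻ x in ball 0 1 \ {0}, g (‖x‖⁻¹ • x) ∂μ := by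
  let φ := (Subtype.val : ({0}ᶜ : Set E) → E) ∘ (homeomorphUnitSphereProd E).symm
  have hφ : MeasurableEmbedding φ :=
    (MeasurableEmbedding.subtype_coe (measurableSet_singleton _).compl).comp
      (homeomorphUnitSphereProd E).symm.measurableEmbedding
  have hrange : Set.range φ = {0}ᶜ := by
    rw [Set.range_comp, (homeomorphUnitSphereProd E).symm.range_coe, Set.image_univ,
      Subtype.range_coe]
  have hnorm (p : sphere (0 : E) 1 × Set.Ioi (0 : ℝ)) : ‖φ p‖ = p.2 := by
    simp [φ, norm_smul, abs_of_pos (Set.mem_Ioi.1 p.2.2)]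
  have hnormalize (p : sphere (0 : E) 1 × Set.Ioi (0 : ℝ)) : ‖φ p‖⁻¹ • φ p = p.1 := by
    rw [hnorm]
    exact inv_smul_smul₀ (Set.mem_Ioi.1 p.2.2).ne' _
  have hball : Set.univ ×ˢ Set.Iio ⟨1, Set.mem_Ioi.2 one_pos⟩ = φ ⁻¹' ball 0 1 := by
    ext p
    simp only [Set.mem_prod, Set.mem_univ, true_and, Set.mem_Iio, Set.mem_preimage,
      mem_ball_zero_iff, hnorm, ← Subtype.coe_lt_coe]
  calc ∫⁻ ω, g ω ∂μ.toSphere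
      = finrank ℝ E * ∫⁻ p in φ ⁻¹' ball 0 1, g p.1 ∂μ.comap φ := by
        rw [Measure.toSphere, lintegral_smul_measure, nsmul_eq_mul, Measure.fst,
          lintegral_map (by fun_prop) measurable_fst, hball]
    _ = finrank ℝ E * ∫⁻ p in φ ⁻¹' ball 0 1, g (‖φ p‖⁻¹ • φ p) ∂μ.comap φ := by
        simp only [hnormalize]
    _ = finrank ℝ E * ∫⁻ x in ball 0 1 \ {0}, g (‖x‖⁻¹ • x) ∂μ := by
        rw [← hφ.lintegral_map (fun x ↦ g (‖x‖⁻¹ • x)), ← hφ.restrict_map, hφ.map_comap, hrange,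
          Measure.restrict_restrict measurableSet_ball, ← Set.sdiff_eq]

variable [FiniteDimensional ℝ E] [μ.IsAddHaarMeasure]

theorem lintegral_comp_smul_addHaar (f : E → ℝ≥0∞) {r : ℝ} (hr : r ≠ 0) :
    ∫⁻ x, f (r • x) ∂μ = ENNReal.ofReal |(r ^ finrank ℝ E)⁻¹| * ∫⁻ x, f x ∂μ := by
  calc ∫⁻ x, f (r • x) ∂μ = ∫⁻ x, f x ∂μ.map (r • ·) :=
        (lintegral_map_equiv f (MeasurableEquiv.smul₀ r hr)).symm
    _ = _ := by rw [Measure.map_addHaar_smul μ hr, lintegral_smul_measure, smul_eq_mul]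

end Haar

section JapaneseBracket

/-- The integral `∫ (1 + ‖x‖²)⁻ᵐ dx` over `ℝⁿ`, as an extended nonnegative real. The exponent refers
to the square of the Japanese bracket, so the integral is finite when `n < 2m`. -/
noncomputable def japaneseIntegral (n : ℕ) (m : ℝ) : ℝ≥0∞ :=
  ∫⁻ x : EuclideanSpace ℝ (Fin n), ENNReal.ofReal ((1 + ‖x‖ ^ 2) ^ (-m))

theorem japaneseIntegral_ne_top {n : ℕ} {m : ℝ} (h : n < 2 * m) : japaneseIntegral n m ≠ ∞ := by
  have hint : Integrable fun x : EuclideanSpace ℝ (Fin n) ↦ (1 + ‖x‖ ^ 2) ^ (-(2 * m) / 2) :=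
    integrable_rpow_neg_one_add_norm_sq (by simpa using h)
  simp only [neg_div, mul_div_cancel_left₀ m two_ne_zero] at hint
  exact hint.lintegral_lt_top.ne

section NormedAddCommGroup

variable {E : Type*} [NormedAddCommGroup E]

theorem norm_sub_le_mul_sqrt_add_norm_sq {k : ℝ} (hk : 0 < k) (x v : E) :
    ‖x - v‖ ≤ (√k + ‖v‖) / √k * √(k + ‖x‖ ^ 2) := by
  have hs : 0 < √k := Real.sqrt_pos.2 hk
  have hx : ‖x‖ ≤ √(k + ‖x‖ ^ 2) := Real.le_sqrt_of_sq_le (by linarith)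
  have hks : √k ≤ √(k + ‖x‖ ^ 2) := Real.sqrt_le_sqrt (by linarith [sq_nonneg ‖x‖])
  have hv : ‖v‖ ≤ ‖v‖ / √k * √(k + ‖x‖ ^ 2) := by
    rw [div_mul_eq_mul_div, le_div_iff₀ hs]
    gcongr
  calc ‖x - v‖ ≤ √(k + ‖x‖ ^ 2) + ‖v‖ / √k * √(k + ‖x‖ ^ 2) :=
        (norm_sub_le x v).trans (add_le_add hx hv)
    _ = _ := by field_simp

theorem norm_sub_rpow_mul_add_norm_sq_rpow_neg_le {γ k : ℝ} (hγ : 0 ≤ γ) (hk : 0 < k) (m : ℝ)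
    (x v : E) :
    ‖x - v‖ ^ γ * (k + ‖x‖ ^ 2) ^ (-m) ≤
      (√k + ‖v‖) ^ γ * k ^ (-(γ / 2)) * (k + ‖x‖ ^ 2) ^ (-(m - γ / 2)) := by
  have hX : 0 < k + ‖x‖ ^ 2 := by positivity
  have hsqrt {y : ℝ} (hy : 0 ≤ y) : √y ^ γ = y ^ (γ / 2) := by
    rw [Real.sqrt_eq_rpow, ← Real.rpow_mul hy, one_div_mul_eq_div]
  calc ‖x - v‖ ^ γ * (k + ‖x‖ ^ 2) ^ (-m)
      ≤ ((√k + ‖v‖) / √k * √(k + ‖x‖ ^ 2)) ^ γ * (k + ‖x‖ ^ 2) ^ (-m) := by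
        gcongr
        exact norm_sub_le_mul_sqrt_add_norm_sq hk x v
    _ = (√k + ‖v‖) ^ γ * k ^ (-(γ / 2)) *
          ((k + ‖x‖ ^ 2) ^ (γ / 2) * (k + ‖x‖ ^ 2) ^ (-m)) := by
        rw [Real.mul_rpow (by positivity) (by positivity),
          Real.div_rpow (by positivity) (by positivity), hsqrt hX.le, hsqrt hk.le,
          Real.rpow_neg hk.le]
        ring
    _ = _ := by rw [← Real.rpow_add hX, ← sub_eq_add_neg, neg_sub]

theorem abs_le_mul_rpow_neg_of_rpow_mul_abs_le {F : E → ℝ} {m M : ℝ}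
    (hF : ∀ u, (1 + ‖u‖ ^ 2) ^ m * |F u| ≤ M) (u : E) : |F u| ≤ M * (1 + ‖u‖ ^ 2) ^ (-m) := by
  rw [Real.rpow_neg (by positivity), ← div_eq_mul_inv, le_div_iff₀' (by positivity)]
  exact hF u

theorem nonneg_of_rpow_mul_abs_le {F : E → ℝ} {m M : ℝ}
    (hF : ∀ u, (1 + ‖u‖ ^ 2) ^ m * |F u| ≤ M) : 0 ≤ M :=
  le_trans (by positivity) (hF 0)

end NormedAddCommGroup

variable {E : Type*} [NormedAddCommGroup E] [InnerProductSpace ℝ E] [FiniteDimensional ℝ E]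
  [MeasurableSpace E] [BorelSpace E]

theorem lintegral_one_add_norm_sq_rpow_neg (m : ℝ) :
    ∫⁻ x : E, ENNReal.ofReal ((1 + ‖x‖ ^ 2) ^ (-m)) = japaneseIntegral (finrank ℝ E) m := by
  rw [japaneseIntegral, ← (stdOrthonormalBasis ℝ E).measurePreserving_repr.lintegral_comp
    (by fun_prop)]
  simp only [LinearIsometryEquiv.norm_map]

theorem lintegral_one_add_mul_norm_sq_rpow_neg {t : ℝ} (ht : 0 < t) (m : ℝ) :
    ∫⁻ x : E, ENNReal.ofReal ((1 + t * ‖x‖ ^ 2) ^ (-m)) =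
      ENNReal.ofReal (t ^ (-(finrank ℝ E / 2) : ℝ)) * japaneseIntegral (finrank ℝ E) m := by
  have hscale (x : E) : t * ‖x‖ ^ 2 = ‖√t • x‖ ^ 2 := by
    rw [norm_smul, mul_pow, Real.norm_of_nonneg (Real.sqrt_nonneg t), Real.sq_sqrt ht.le]
  have hpow : |(√t ^ finrank ℝ E)⁻¹| = t ^ (-(finrank ℝ E / 2) : ℝ) := by
    rw [abs_of_nonneg (by positivity), Real.sqrt_eq_rpow, ← Real.rpow_natCast,
      ← Real.rpow_mul ht.le, one_div_mul_eq_div, Real.rpow_neg ht.le]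
  simp only [hscale]
  rw [lintegral_comp_smul_addHaar volume (fun x : E ↦ ENNReal.ofReal ((1 + ‖x‖ ^ 2) ^ (-m)))
    (Real.sqrt_ne_zero'.2 ht), lintegral_one_add_norm_sq_rpow_neg, hpow]

theorem lintegral_add_norm_sq_rpow_neg {k : ℝ} (hk : 0 < k) (m : ℝ) :
    ∫⁻ x : E, ENNReal.ofReal ((k + ‖x‖ ^ 2) ^ (-m)) =
      ENNReal.ofReal (k ^ (finrank ℝ E / 2 - m)) * japaneseIntegral (finrank ℝ E) m := by
  have hscale (x : E) : (k + ‖x‖ ^ 2) ^ (-m) = k ^ (-m) * (1 + k⁻¹ * ‖x‖ ^ 2) ^ (-m) := by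
    rw [← Real.mul_rpow hk.le (by positivity), mul_add, mul_one, mul_inv_cancel_left₀ hk.ne']
  simp only [hscale, ENNReal.ofReal_mul (Real.rpow_nonneg hk.le (-m))]
  rw [lintegral_const_mul' _ _ ENNReal.ofReal_ne_top,
    lintegral_one_add_mul_norm_sq_rpow_neg (inv_pos.2 hk), ← mul_assoc,
    ← ENNReal.ofReal_mul (by positivity), Real.inv_rpow hk.le, ← Real.rpow_neg hk.le, neg_neg,
    ← Real.rpow_add hk, neg_add_eq_sub]

theorem lintegral_norm_sub_rpow_mul_add_norm_sq_rpow_neg_le {γ k : ℝ} (hγ : 0 ≤ γ) (hk : 0 < k)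
    (m : ℝ) (v : E) :
    ∫⁻ x : E, ENNReal.ofReal (‖x - v‖ ^ γ * (k + ‖x‖ ^ 2) ^ (-m)) ≤
      ENNReal.ofReal ((√k + ‖v‖) ^ γ * k ^ (finrank ℝ E / 2 - m)) *
        japaneseIntegral (finrank ℝ E) (m - γ / 2) := by
  calc ∫⁻ x : E, ENNReal.ofReal (‖x - v‖ ^ γ * (k + ‖x‖ ^ 2) ^ (-m))
      ≤ ∫⁻ x : E, ENNReal.ofReal ((√k + ‖v‖) ^ γ * k ^ (-(γ / 2))) *
          ENNReal.ofReal ((k + ‖x‖ ^ 2) ^ (-(m - γ / 2))) := by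
        refine lintegral_mono fun x ↦ ?_
        rw [← ENNReal.ofReal_mul (by positivity)]
        exact ENNReal.ofReal_le_ofReal (norm_sub_rpow_mul_add_norm_sq_rpow_neg_le hγ hk m x v)
    _ = _ := by
        rw [lintegral_const_mul' _ _ ENNReal.ofReal_ne_top, lintegral_add_norm_sq_rpow_neg hk,
          ← mul_assoc, ← ENNReal.ofReal_mul (by positivity), mul_assoc (_ ^ γ),
          ← Real.rpow_add hk]
        congr 4
        ring

theorem lintegral_toSphere_norm_sub_rpow_mul_rpow_neg_le {γ : ℝ} (hγ : 0 ≤ γ) (m : ℝ) (v : E) :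
    ∫⁻ vs : E, ∫⁻ _ : sphere (0 : E) 1, ENNReal.ofReal (‖vs - v‖ ^ γ * (1 + ‖vs‖ ^ 2) ^ (-m))
        ∂(volume : Measure E).toSphere ≤
      japaneseIntegral (finrank ℝ E) (m - γ / 2) * (volume : Measure E).toSphere Set.univ *
        ENNReal.ofReal ((1 + ‖v‖) ^ γ) := by
  have hv := lintegral_norm_sub_rpow_mul_add_norm_sq_rpow_neg_le (E := E) hγ one_pos m v
  rw [Real.sqrt_one, Real.one_rpow, mul_one] at hv
  simp only [lintegral_const]
  rw [lintegral_mul_const' _ _ (measure_ne_top _ _)]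
  exact (mul_le_mul_left hv _).trans_eq (by ring)

end JapaneseBracket

section OrthogonalSplitting

theorem rpow_neg_mul_rpow_neg_le {α β p q t : ℝ} (hα : 0 ≤ α) (hβ : 0 ≤ β) (hp : 0 < p)
    (hq : 0 < q) (ht : 0 < t) (hpq : t ≤ p + q) :
    p ^ (-α) * q ^ (-β) ≤ (t / 2) ^ (-β) * p ^ (-α) + (t / 2) ^ (-α) * q ^ (-β) := by
  obtain hp' | hq' : t / 2 ≤ p ∨ t / 2 ≤ q := by
    by_contra! h
    linarith
  · have := Real.rpow_le_rpow_of_nonpos (half_pos ht) hp' (neg_nonpos.2 hα)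
    exact le_add_of_nonneg_of_le (by positivity) (by gcongr)
  · have := Real.rpow_le_rpow_of_nonpos (half_pos ht) hq' (neg_nonpos.2 hβ)
    rw [mul_comm (p ^ _)]
    exact le_add_of_le_of_nonneg (by gcongr) (by positivity)

section Normalization

variable {E : Type*} [NormedAddCommGroup E] [InnerProductSpace ℝ E]

theorem one_add_mul_norm_sq_starProjection_normalize_rpow_neg_le (K : Submodule ℝ E)
    [K.HasOrthogonalProjection] {a t : ℝ} (ha : 0 ≤ a) (ht : 0 ≤ t) {x : E} (hx0 : x ≠ 0)
    (hx1 : ‖x‖ ≤ 1) :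
    (1 + t * ‖K.starProjection (‖x‖⁻¹ • x)‖ ^ 2) ^ (-a) ≤
      2 ^ a * (1 + (1 + t) * ‖K.starProjection x‖ ^ 2) ^ (-a) := by
  have hK : ‖K.starProjection x‖ ^ 2 ≤ 1 :=
    pow_le_one₀ (norm_nonneg _) ((K.norm_starProjection_apply_le x).trans hx1)
  have hnormalize : ‖K.starProjection x‖ ≤ ‖K.starProjection (‖x‖⁻¹ • x)‖ := by
    rw [map_smul, norm_smul, norm_inv, norm_norm]
    exact le_mul_of_one_le_left (norm_nonneg _) ((one_le_inv₀ (norm_pos_iff.2 hx0)).2 hx1)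
  have hbase : (1 + (1 + t) * ‖K.starProjection x‖ ^ 2) / 2 ≤
      1 + t * ‖K.starProjection (‖x‖⁻¹ • x)‖ ^ 2 := by
    have : t * ‖K.starProjection x‖ ^ 2 ≤ t * ‖K.starProjection (‖x‖⁻¹ • x)‖ ^ 2 := by gcongr
    linarith [mul_nonneg ht (sq_nonneg ‖K.starProjection x‖)]
  calc (1 + t * ‖K.starProjection (‖x‖⁻¹ • x)‖ ^ 2) ^ (-a)
      ≤ ((1 + (1 + t) * ‖K.starProjection x‖ ^ 2) / 2) ^ (-a) :=
        Real.rpow_le_rpow_of_nonpos (by positivity) hbase (neg_nonpos.2 ha)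
    _ = _ := by
        rw [Real.div_rpow (by positivity) zero_le_two, Real.rpow_neg zero_le_two, div_inv_eq_mul,
          mul_comm]

end Normalization

variable {E : Type*} [NormedAddCommGroup E] [InnerProductSpace ℝ E] [FiniteDimensional ℝ E]
  [MeasurableSpace E] [BorelSpace E]

theorem lintegral_toSphere_one_add_mul_norm_sq_rpow_neg_le (K : Submodule ℝ E) {a t : ℝ}
    (ha : 0 ≤ a) (ht : 0 ≤ t) :
    ∫⁻ ω : sphere (0 : E) 1, ENNReal.ofReal ((1 + t * ‖K.starProjection ω‖ ^ 2) ^ (-a))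
        ∂(volume : Measure E).toSphere ≤
      ENNReal.ofReal (2 ^ a * (1 + t) ^ (-(finrank ℝ K / 2) : ℝ)) *
        (finrank ℝ E * (japaneseIntegral (finrank ℝ K) a * volume (ball (0 : Kᗮ) 1))) := by
  let f (y : K) : ℝ≥0∞ := ENNReal.ofReal (2 ^ a) * ENNReal.ofReal ((1 + (1 + t) * ‖y‖ ^ 2) ^ (-a))
  let g : Kᗮ → ℝ≥0∞ := (ball 0 1).indicator 1
  have hf : ∫⁻ y, f y = ENNReal.ofReal (2 ^ a * (1 + t) ^ (-(finrank ℝ K / 2) : ℝ)) *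
      japaneseIntegral (finrank ℝ K) a := by
    rw [lintegral_const_mul' _ _ ENNReal.ofReal_ne_top,
      lintegral_one_add_mul_norm_sq_rpow_neg (by positivity), ← mul_assoc,
      ← ENNReal.ofReal_mul (by positivity)]
  have hg : ∫⁻ z, g z = volume (ball (0 : Kᗮ) 1) := lintegral_indicator_one measurableSet_ball
  have hfg : ∀ x ∈ ball (0 : E) 1 \ {0},
      ENNReal.ofReal ((1 + t * ‖K.starProjection (‖x‖⁻¹ • x)‖ ^ 2) ^ (-a)) ≤
        f (K.orthogonalProjectionOnto x) * g (Kᗮ.orthogonalProjectionOnto x) := by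
    intro x hx
    have hx1 : ‖x‖ < 1 := mem_ball_zero_iff.1 hx.1
    have hgx : g (Kᗮ.orthogonalProjectionOnto x) = 1 := Set.indicator_of_mem
      (mem_ball_zero_iff.2 ((Kᗮ.norm_orthogonalProjectionOnto_apply_le x).trans_lt hx1)) _
    have hfx : f (K.orthogonalProjectionOnto x) =
        ENNReal.ofReal (2 ^ a * (1 + (1 + t) * ‖K.starProjection x‖ ^ 2) ^ (-a)) :=
      (ENNReal.ofReal_mul (by positivity)).symm
    rw [hgx, mul_one, hfx]
    exact ENNReal.ofReal_le_ofReal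
      (one_add_mul_norm_sq_starProjection_normalize_rpow_neg_le K ha ht hx.2 hx1.le)
  calc _ = finrank ℝ E * ∫⁻ x in ball (0 : E) 1 \ {0},
          ENNReal.ofReal ((1 + t * ‖K.starProjection (‖x‖⁻¹ • x)‖ ^ 2) ^ (-a)) :=
        lintegral_toSphere_eq_setLIntegral_ball volume
          (g := fun x ↦ ENNReal.ofReal ((1 + t * ‖K.starProjection x‖ ^ 2) ^ (-a))) (by fun_prop)
    _ ≤ finrank ℝ E * ∫⁻ x : E,
          f (K.orthogonalProjectionOnto x) * g (Kᗮ.orthogonalProjectionOnto x) :=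
        mul_le_mul_right ((setLIntegral_mono' (measurableSet_ball.diff
          (measurableSet_singleton 0)) hfg).trans (setLIntegral_le_lintegral _ _)) _
    _ = _ := by
        rw [lintegral_mul_orthogonalProjectionOnto K (by fun_prop)
          (measurable_one.indicator measurableSet_ball), hf, hg]
        ring

theorem ofReal_rpow_neg_mul_lintegral_toSphere_le (K : Submodule ℝ E) {a b t : ℝ}
    (ha : 0 ≤ a) (ht : 0 ≤ t) :
    ENNReal.ofReal (((1 + t) / 2) ^ (-b)) *
        ∫⁻ ω : sphere (0 : E) 1, ENNReal.ofReal ((1 + t * ‖K.starProjection ω‖ ^ 2) ^ (-a))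
          ∂(volume : Measure E).toSphere ≤
      ENNReal.ofReal (2 ^ (a + b) * (1 + t) ^ (-(b + finrank ℝ K / 2))) *
        (finrank ℝ E * (japaneseIntegral (finrank ℝ K) a * volume (ball (0 : Kᗮ) 1))) := by
  have hpow : 2 ^ (a + b) * (1 + t) ^ (-(b + finrank ℝ K / 2)) =
      ((1 + t) / 2) ^ (-b) * (2 ^ a * (1 + t) ^ (-(finrank ℝ K / 2) : ℝ)) := by
    rw [Real.rpow_add two_pos, neg_add, Real.rpow_add (by positivity),
      Real.div_rpow (by positivity) zero_le_two, Real.rpow_neg zero_le_two, div_inv_eq_mul]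
    ring
  rw [hpow, ENNReal.ofReal_mul (by positivity), mul_assoc]
  gcongr
  exact lintegral_toSphere_one_add_mul_norm_sq_rpow_neg_le K ha ht

theorem lintegral_toSphere_rpow_mul_rpow_le (K : Submodule ℝ E) {m t : ℝ}
    (hK : finrank ℝ K / 2 ≤ m) (hK' : finrank ℝ Kᗮ / 2 ≤ m) (ht : 0 ≤ t) :
    ∫⁻ ω : sphere (0 : E) 1, ENNReal.ofReal
        ((1 + t * ‖Kᗮ.starProjection ω‖ ^ 2) ^ (finrank ℝ K / 2 - m) *
          (1 + t * ‖K.starProjection ω‖ ^ 2) ^ (finrank ℝ Kᗮ / 2 - m))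
        ∂(volume : Measure E).toSphere ≤
      ENNReal.ofReal (2 ^ (2 * m - finrank ℝ E / 2) * (1 + t) ^ (-m)) *
        (finrank ℝ E *
          (japaneseIntegral (finrank ℝ Kᗮ) (m - finrank ℝ K / 2) * volume (ball (0 : K) 1) +
            japaneseIntegral (finrank ℝ K) (m - finrank ℝ Kᗮ / 2) * volume (ball (0 : Kᗮ) 1))) := by
  have hdim : (finrank ℝ K + finrank ℝ Kᗮ : ℝ) = finrank ℝ E :=
    mod_cast K.finrank_add_finrank_orthogonal
  simp only [← neg_sub m]
  set α := m - finrank ℝ K / 2 with hα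
  set β := m - finrank ℝ Kᗮ / 2 with hβ
  let P (ω : sphere (0 : E) 1) : ℝ := 1 + t * ‖Kᗮ.starProjection ω‖ ^ 2
  let Q (ω : sphere (0 : E) 1) : ℝ := 1 + t * ‖K.starProjection ω‖ ^ 2
  have hsplit (ω : sphere (0 : E) 1) : P ω ^ (-α) * Q ω ^ (-β) ≤
      ((1 + t) / 2) ^ (-β) * P ω ^ (-α) + ((1 + t) / 2) ^ (-α) * Q ω ^ (-β) := by
    have hω := K.norm_sq_eq_add_norm_sq_starProjection (ω : E)
    rw [norm_eq_of_mem_sphere ω] at hω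
    exact rpow_neg_mul_rpow_neg_le (sub_nonneg.2 hK) (sub_nonneg.2 hK') (by positivity)
      (by positivity) (by positivity) (by linear_combination t * hω)
  have hP := ofReal_rpow_neg_mul_lintegral_toSphere_le Kᗮ (b := β) (sub_nonneg.2 hK) ht
  have hQ := ofReal_rpow_neg_mul_lintegral_toSphere_le K (b := α) (sub_nonneg.2 hK') ht
  rw [← hα, show α + β = 2 * m - finrank ℝ E / 2 by linarith,
    show β + finrank ℝ Kᗮ / 2 = m by linarith, K.orthogonal_orthogonal] at hP
  rw [← hβ, show β + α = 2 * m - finrank ℝ E / 2 by linarith,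
    show α + finrank ℝ K / 2 = m by linarith] at hQ
  calc ∫⁻ ω, ENNReal.ofReal (P ω ^ (-α) * Q ω ^ (-β)) ∂(volume : Measure E).toSphere
      ≤ ∫⁻ ω, (ENNReal.ofReal (((1 + t) / 2) ^ (-β)) * ENNReal.ofReal (P ω ^ (-α)) +
          ENNReal.ofReal (((1 + t) / 2) ^ (-α)) * ENNReal.ofReal (Q ω ^ (-β)))
            ∂(volume : Measure E).toSphere := by
        refine lintegral_mono fun ω ↦ ?_
        rw [← ENNReal.ofReal_mul (by positivity), ← ENNReal.ofReal_mul (by positivity),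
          ← ENNReal.ofReal_add (by positivity) (by positivity)]
        exact ENNReal.ofReal_le_ofReal (hsplit ω)
    _ ≤ _ := by
        rw [lintegral_add_left (by fun_prop), lintegral_const_mul' _ _ ENNReal.ofReal_ne_top,
          lintegral_const_mul' _ _ ENNReal.ofReal_ne_top, mul_add, mul_add]
        exact add_le_add hP hQ

theorem lintegral_starProjection_rpow_mul_rpow_neg_le (K : Submodule ℝ E) {γ : ℝ} (hγ : 0 ≤ γ)
    (m : ℝ) (v : E) :
    ∫⁻ u : E, ENNReal.ofReal (‖K.starProjection u‖ ^ γ *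
        (1 + ‖v + Kᗮ.starProjection u‖ ^ 2) ^ (-m) *
        (1 + ‖v + K.starProjection u‖ ^ 2) ^ (-m)) ≤
      ENNReal.ofReal (2 ^ γ * (1 + ‖v‖) ^ γ *
        ((1 + ‖Kᗮ.starProjection v‖ ^ 2) ^ (finrank ℝ K / 2 - m) *
          (1 + ‖K.starProjection v‖ ^ 2) ^ (finrank ℝ Kᗮ / 2 - m))) *
        (japaneseIntegral (finrank ℝ K) (m - γ / 2) * japaneseIntegral (finrank ℝ Kᗮ) m) := by
  let a : ℝ := 1 + ‖Kᗮ.starProjection v‖ ^ 2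
  let b : ℝ := 1 + ‖K.starProjection v‖ ^ 2
  let f (y : K) : ℝ≥0∞ := ENNReal.ofReal
    (‖y - K.orthogonalProjectionOnto v‖ ^ γ * (a + ‖y‖ ^ 2) ^ (-m))
  let g (z : Kᗮ) : ℝ≥0∞ := ENNReal.ofReal ((b + ‖z‖ ^ 2) ^ (-m))
  have hfactor (u : E) : ENNReal.ofReal (‖K.starProjection u‖ ^ γ *
      (1 + ‖v + Kᗮ.starProjection u‖ ^ 2) ^ (-m) * (1 + ‖v + K.starProjection u‖ ^ 2) ^ (-m)) =
        f (K.orthogonalProjectionOnto (u + v)) * g (Kᗮ.orthogonalProjectionOnto (u + v)) := by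
    rw [← ENNReal.ofReal_mul (by positivity), norm_add_starProjection_sq K,
      norm_add_starProjection_orthogonal_sq K, ← add_assoc, ← add_assoc, mul_right_comm,
      ← map_sub, add_sub_cancel_right]
    rfl
  have hspeed : √a + ‖K.orthogonalProjectionOnto v‖ ≤ 2 * (1 + ‖v‖) := by
    have ha : √a ≤ 1 + ‖Kᗮ.starProjection v‖ :=
      Real.sqrt_le_iff.2 ⟨by positivity, by linarith [norm_nonneg (Kᗮ.starProjection v)]⟩
    linarith [Kᗮ.norm_starProjection_apply_le v, K.norm_orthogonalProjectionOnto_apply_le v]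
  calc _ = ∫⁻ u : E, f (K.orthogonalProjectionOnto u) * g (Kᗮ.orthogonalProjectionOnto u) := by
        simp only [hfactor]
        exact lintegral_add_right_eq_self
          (fun u ↦ f (K.orthogonalProjectionOnto u) * g (Kᗮ.orthogonalProjectionOnto u)) v
    _ = (∫⁻ y, f y) * ∫⁻ z, g z :=
        lintegral_mul_orthogonalProjectionOnto K (by fun_prop) (by fun_prop)
    _ ≤ ENNReal.ofReal ((2 * (1 + ‖v‖)) ^ γ * a ^ (finrank ℝ K / 2 - m)) *
          japaneseIntegral (finrank ℝ K) (m - γ / 2) *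
          (ENNReal.ofReal (b ^ (finrank ℝ Kᗮ / 2 - m)) * japaneseIntegral (finrank ℝ Kᗮ) m) := by
        rw [lintegral_add_norm_sq_rpow_neg (by positivity) m]
        gcongr
        refine (lintegral_norm_sub_rpow_mul_add_norm_sq_rpow_neg_le hγ (by positivity) m _).trans ?_
        gcongr
    _ = _ := by
        rw [mul_mul_mul_comm, ← ENNReal.ofReal_mul (by positivity),
          Real.mul_rpow zero_le_two (by positivity), mul_assoc (2 ^ γ * _)]

theorem lintegral_inner_rpow_mul_rpow_neg_le {γ : ℝ} (hγ : 0 ≤ γ) (m : ℝ) (v : E) {ω : E}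
    (hω : ‖ω‖ = 1) :
    ∫⁻ vs : E, ENNReal.ofReal (|⟪vs - v, ω⟫| ^ γ * (1 + ‖vs - ⟪vs - v, ω⟫ • ω‖ ^ 2) ^ (-m) *
        (1 + ‖v + ⟪vs - v, ω⟫ • ω‖ ^ 2) ^ (-m)) ≤
      ENNReal.ofReal (2 ^ γ * (1 + ‖v‖) ^ γ *
        ((1 + ‖(ℝ ∙ ω)ᗮ.starProjection v‖ ^ 2) ^ (1 / 2 - m) *
          (1 + ‖(ℝ ∙ ω).starProjection v‖ ^ 2) ^ ((finrank ℝ E - 1 : ℕ) / 2 - m))) *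
        (japaneseIntegral 1 (m - γ / 2) * japaneseIntegral (finrank ℝ E - 1) m) := by
  have hω0 : ω ≠ 0 := norm_ne_zero_iff.1 (hω ▸ one_ne_zero)
  have hproj (u : E) : (ℝ ∙ ω).starProjection u = ⟪u, ω⟫ • ω := by
    rw [Submodule.starProjection_unit_singleton ℝ hω, real_inner_comm]
  have hproj' (u : E) : (ℝ ∙ ω)ᗮ.starProjection u = u - ⟪u, ω⟫ • ω := by
    rw [← hproj, eq_sub_iff_add_eq', (ℝ ∙ ω).starProjection_add_starProjection_orthogonal]
  have hfibre := lintegral_starProjection_rpow_mul_rpow_neg_le (ℝ ∙ ω) hγ m v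
  rw [finrank_span_singleton hω0, finrank_orthogonal_span_singleton_eq_sub_one hω0,
    ← lintegral_sub_right_eq_self _ v, Nat.cast_one] at hfibre
  convert! hfibre using 7
  · rw [hproj, norm_smul, hω, mul_one, Real.norm_eq_abs]
  · rw [hproj', ← add_sub_assoc, add_sub_cancel]
  · rw [hproj]

theorem lintegral_toSphere_starProjection_span_rpow_mul_rpow_le [Nontrivial E] {m : ℝ}
    (hm : finrank ℝ E ≤ 2 * m) (v : E) :
    ∫⁻ ω : sphere (0 : E) 1, ENNReal.ofReal
        ((1 + ‖(ℝ ∙ (ω : E))ᗮ.starProjection v‖ ^ 2) ^ (1 / 2 - m) *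
          (1 + ‖(ℝ ∙ (ω : E)).starProjection v‖ ^ 2) ^ ((finrank ℝ E - 1 : ℕ) / 2 - m))
        ∂(volume : Measure E).toSphere ≤
      ENNReal.ofReal (2 ^ (2 * m - finrank ℝ E / 2) * (1 + ‖v‖ ^ 2) ^ (-m)) * (finrank ℝ E *
        (japaneseIntegral (finrank ℝ E - 1) (m - 1 / 2) *
            volume (ball (0 : EuclideanSpace ℝ (Fin 1)) 1) +
          japaneseIntegral 1 (m - (finrank ℝ E - 1 : ℕ) / 2) *
            volume (ball (0 : EuclideanSpace ℝ (Fin (finrank ℝ E - 1))) 1))) := by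
  obtain ⟨e, he, hv⟩ := exists_norm_starProjection_span_singleton_eq v
  have he0 : e ≠ 0 := norm_ne_zero_iff.1 (he ▸ one_ne_zero)
  have hdim : 1 ≤ finrank ℝ E := Module.finrank_pos
  have hdim' : (1 : ℝ) ≤ finrank ℝ E := by exact_mod_cast hdim
  have hline := finrank_span_singleton (K := ℝ) he0
  have hperp := finrank_orthogonal_span_singleton_eq_sub_one he0
  have hsphere := lintegral_toSphere_rpow_mul_rpow_le (ℝ ∙ e) (m := m) (t := ‖v‖ ^ 2)
    (by rw [hline]; push_cast; linarith) (by rw [hperp]; push_cast [hdim]; linarith)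
    (by positivity)
  rw [volume_ball_eq_euclideanSpace, volume_ball_eq_euclideanSpace (E := (ℝ ∙ e)ᗮ), hline, hperp,
    Nat.cast_one] at hsphere
  simpa only [hv _ (norm_eq_of_mem_sphere _), mul_pow] using hsphere

theorem exists_lintegral_lintegral_gain_weight_le [Nontrivial E] {γ m : ℝ} (hγ : 0 ≤ γ)
    (hm : finrank ℝ E + γ < 2 * m) :
    ∃ C : ℝ≥0, ∀ v : E, ∫⁻ vs : E, ∫⁻ ω : sphere (0 : E) 1,
      ENNReal.ofReal (|⟪vs - v, (ω : E)⟫| ^ γ *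
        (1 + ‖vs - ⟪vs - v, (ω : E)⟫ • (ω : E)‖ ^ 2) ^ (-m) *
        (1 + ‖v + ⟪vs - v, (ω : E)⟫ • (ω : E)‖ ^ 2) ^ (-m)) ∂(volume : Measure E).toSphere ≤
      C * ENNReal.ofReal ((1 + ‖v‖) ^ γ * (1 + ‖v‖ ^ 2) ^ (-m)) := by
  set n := finrank ℝ E
  let A : ℝ≥0∞ := japaneseIntegral 1 (m - γ / 2) * japaneseIntegral (n - 1) m
  let B : ℝ≥0∞ := n * (japaneseIntegral (n - 1) (m - 1 / 2) *
      volume (ball (0 : EuclideanSpace ℝ (Fin 1)) 1) +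
    japaneseIntegral 1 (m - (n - 1 : ℕ) / 2) *
      volume (ball (0 : EuclideanSpace ℝ (Fin (n - 1))) 1))
  have hn1 : 1 ≤ n := Module.finrank_pos
  have hn1' : (1 : ℝ) ≤ n := by exact_mod_cast hn1
  have hA : A ≠ ∞ := by
    refine ENNReal.mul_ne_top (japaneseIntegral_ne_top ?_) (japaneseIntegral_ne_top ?_) <;>
      push_cast [hn1] <;> linarith
  have hB : B ≠ ∞ := by
    refine ENNReal.mul_ne_top (ENNReal.natCast_ne_top n) (ENNReal.add_ne_top.2
      ⟨ENNReal.mul_ne_top (japaneseIntegral_ne_top ?_) measure_ball_lt_top.ne,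
        ENNReal.mul_ne_top (japaneseIntegral_ne_top ?_) measure_ball_lt_top.ne⟩) <;>
      push_cast [hn1] <;> linarith
  have hC : ENNReal.ofReal (2 ^ γ * 2 ^ (2 * m - n / 2)) * (A * B) ≠ ∞ :=
    ENNReal.mul_ne_top ENNReal.ofReal_ne_top (ENNReal.mul_ne_top hA hB)
  refine ⟨(ENNReal.ofReal (2 ^ γ * 2 ^ (2 * m - n / 2)) * (A * B)).toNNReal, fun v ↦ ?_⟩
  rw [ENNReal.coe_toNNReal hC, lintegral_lintegral_swap (by fun_prop)]
  calc _ ≤ ∫⁻ ω : sphere (0 : E) 1, ENNReal.ofReal (2 ^ γ * (1 + ‖v‖) ^ γ) * A *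
          ENNReal.ofReal ((1 + ‖(ℝ ∙ (ω : E))ᗮ.starProjection v‖ ^ 2) ^ (1 / 2 - m) *
          (1 + ‖(ℝ ∙ (ω : E)).starProjection v‖ ^ 2) ^ ((n - 1 : ℕ) / 2 - m))
          ∂(volume : Measure E).toSphere := by
        refine lintegral_mono fun ω ↦ ?_
        rw [mul_right_comm, ← ENNReal.ofReal_mul (by positivity)]
        exact lintegral_inner_rpow_mul_rpow_neg_le hγ m v (norm_eq_of_mem_sphere ω)
    _ ≤ ENNReal.ofReal (2 ^ γ * (1 + ‖v‖) ^ γ) * A *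
          (ENNReal.ofReal (2 ^ (2 * m - n / 2) * (1 + ‖v‖ ^ 2) ^ (-m)) * B) := by
        rw [lintegral_const_mul' _ _ (ENNReal.mul_ne_top ENNReal.ofReal_ne_top hA)]
        gcongr
        exact lintegral_toSphere_starProjection_span_rpow_mul_rpow_le (by linarith) v
    _ = _ := by
        rw [mul_mul_mul_comm, ← ENNReal.ofReal_mul (by positivity), mul_mul_mul_comm (2 ^ γ),
          ENNReal.ofReal_mul (by positivity), mul_right_comm]

end OrthogonalSplitting

theorem abs_integral_integral_le_of_lintegral_lintegral_le {X Y : Type*} [MeasurableSpace X]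
    [MeasurableSpace Y] {μ : Measure X} {ν : Measure Y} {f w : X → Y → ℝ} {A D : ℝ} {C : ℝ≥0}
    (hA : 0 ≤ A) (hD : 0 ≤ D) (hfw : ∀ x y, |f x y| ≤ A * w x y)
    (hw : ∫⁻ x, ∫⁻ y, ENNReal.ofReal (w x y) ∂ν ∂μ ≤ C * ENNReal.ofReal D) :
    |∫ x, ∫ y, f x y ∂ν ∂μ| ≤ C * A * D := by
  rw [← ENNReal.ofReal_le_ofReal_iff (by positivity), ← Real.enorm_eq_ofReal_abs]
  calc ‖∫ x, ∫ y, f x y ∂ν ∂μ‖ₑ ≤ ∫⁻ x, ∫⁻ y, ‖f x y‖ₑ ∂ν ∂μ :=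
        (enorm_integral_le_lintegral_enorm _).trans
          (lintegral_mono fun x ↦ enorm_integral_le_lintegral_enorm _)
    _ ≤ ∫⁻ x, ∫⁻ y, ENNReal.ofReal A * ENNReal.ofReal (w x y) ∂ν ∂μ := by
        refine lintegral_mono fun x ↦ lintegral_mono fun y ↦ ?_
        rw [Real.enorm_eq_ofReal_abs, ← ENNReal.ofReal_mul hA]
        exact ENNReal.ofReal_le_ofReal (hfw x y)
    _ ≤ ENNReal.ofReal A * (C * ENNReal.ofReal D) := by
        simp only [lintegral_const_mul' _ _ ENNReal.ofReal_ne_top]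
        gcongr
    _ = ENNReal.ofReal (C * A * D) := by
        rw [mul_comm (C : ℝ), mul_assoc, ENNReal.ofReal_mul hA, ENNReal.ofReal_mul C.coe_nonneg,
          ENNReal.ofReal_coe_nnreal]

section Collision

variable {E : Type*} [NormedAddCommGroup E] [InnerProductSpace ℝ E]

/-- The collision kernel `|v - v_*|^γ B₀(cos θ)`, with `cos θ = ω · (v - v_*) / |v - v_*|` read as
`0` when `v = v_*`. -/
noncomputable def collisionKernel (γ : ℝ) (B₀ : ℝ → ℝ) (v vs ω : E) : ℝ :=
  ‖v - vs‖ ^ γ * B₀ (⟪ω, v - vs⟫ / ‖v - vs‖)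

theorem abs_collisionKernel_le {γ C_B : ℝ} (hγ1 : γ ≤ 1) (hCB : 0 ≤ C_B) {B₀ : ℝ → ℝ}
    (hB₀ : ∀ c ∈ Set.Icc (-1 : ℝ) 1, |B₀ c| ≤ C_B * |c|) (v vs : E) {ω : E}
    (hω : ‖ω‖ = 1) :
    |collisionKernel γ B₀ v vs ω| ≤ C_B * |⟪vs - v, ω⟫| ^ γ := by
  set c := ⟪ω, v - vs⟫ / ‖v - vs‖ with hc
  have hc1 : |c| ≤ 1 := by
    have := abs_real_inner_div_norm_mul_norm_le_one ω (v - vs)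
    rwa [hω, one_mul] at this
  have hmul : ‖v - vs‖ * |c| = |⟪vs - v, ω⟫| := by
    rw [hc, abs_div, abs_norm, real_inner_comm, ← neg_sub vs, inner_neg_left, abs_neg, norm_neg]
    obtain h | h := eq_or_ne (vs - v) 0
    · simp [h]
    · exact mul_div_cancel₀ _ (norm_ne_zero_iff.2 h)
  calc |collisionKernel γ B₀ v vs ω| = ‖v - vs‖ ^ γ * |B₀ c| := by
        rw [collisionKernel, abs_mul, abs_of_nonneg (by positivity)]
    _ ≤ ‖v - vs‖ ^ γ * (C_B * |c| ^ γ) := by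
        gcongr
        refine (hB₀ c (abs_le.1 hc1)).trans ?_
        gcongr
        exact Real.self_le_rpow_of_le_one (abs_nonneg c) hc1 hγ1
    _ = C_B * |⟪vs - v, ω⟫| ^ γ := by
        rw [← hmul, Real.mul_rpow (norm_nonneg _) (abs_nonneg _)]
        ring

variable [FiniteDimensional ℝ E] [MeasurableSpace E] [BorelSpace E]

/-- The gain part `Q₊(F₁, F₂)` of the Boltzmann collision operator. -/
noncomputable def collisionGain (γ : ℝ) (B₀ : ℝ → ℝ) (F₁ F₂ : E → ℝ) (v : E) : ℝ :=
  ∫ vs : E, ∫ ω : sphere (0 : E) 1,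
    collisionKernel γ B₀ v vs ω * F₁ (vs - ⟪vs - v, (ω : E)⟫ • (ω : E)) *
      F₂ (v + ⟪vs - v, (ω : E)⟫ • (ω : E)) ∂(volume : Measure E).toSphere

/-- The loss part `Q₋(F₁, F₂)` of the Boltzmann collision operator. -/
noncomputable def collisionLoss (γ : ℝ) (B₀ : ℝ → ℝ) (F₁ F₂ : E → ℝ) (v : E) : ℝ :=
  ∫ vs : E, ∫ ω : sphere (0 : E) 1, collisionKernel γ B₀ v vs ω * F₁ vs * F₂ v
    ∂(volume : Measure E).toSphere

theorem exists_abs_collisionGain_le [Nontrivial E] {γ m : ℝ} (hγ0 : 0 ≤ γ) (hγ1 : γ ≤ 1)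
    (hm : finrank ℝ E + γ < 2 * m) :
    ∃ C : ℝ≥0, ∀ (C_B : ℝ) (B₀ : ℝ → ℝ), 0 ≤ C_B →
      (∀ c ∈ Set.Icc (-1 : ℝ) 1, |B₀ c| ≤ C_B * |c|) →
      ∀ (F₁ F₂ : E → ℝ) (M₁ M₂ : ℝ), (∀ u, (1 + ‖u‖ ^ 2) ^ m * |F₁ u| ≤ M₁) →
      (∀ u, (1 + ‖u‖ ^ 2) ^ m * |F₂ u| ≤ M₂) → ∀ v,
        |collisionGain γ B₀ F₁ F₂ v| ≤
          C * (C_B * M₁ * M₂) * ((1 + ‖v‖) ^ γ * (1 + ‖v‖ ^ 2) ^ (-m)) := by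
  obtain ⟨C, hC⟩ := exists_lintegral_lintegral_gain_weight_le (E := E) hγ0 hm
  refine ⟨C, fun C_B B₀ hCB hB₀ F₁ F₂ M₁ M₂ hF₁ hF₂ v ↦ ?_⟩
  have hM₁ := nonneg_of_rpow_mul_abs_le hF₁
  have hM₂ := nonneg_of_rpow_mul_abs_le hF₂
  refine abs_integral_integral_le_of_lintegral_lintegral_le (by positivity) (by positivity)
    (fun vs ω ↦ ?_) (hC v)
  rw [abs_mul, abs_mul]
  calc _ ≤ C_B * |⟪vs - v, (ω : E)⟫| ^ γ *
          (M₁ * (1 + ‖vs - ⟪vs - v, (ω : E)⟫ • (ω : E)‖ ^ 2) ^ (-m)) *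
          (M₂ * (1 + ‖v + ⟪vs - v, (ω : E)⟫ • (ω : E)‖ ^ 2) ^ (-m)) := by
        gcongr
        · exact abs_collisionKernel_le hγ1 hCB hB₀ v vs (norm_eq_of_mem_sphere ω)
        · exact abs_le_mul_rpow_neg_of_rpow_mul_abs_le hF₁ _
        · exact abs_le_mul_rpow_neg_of_rpow_mul_abs_le hF₂ _
    _ = _ := by ring

theorem exists_abs_collisionLoss_le {γ m : ℝ} (hγ0 : 0 ≤ γ) (hγ1 : γ ≤ 1)
    (hm : finrank ℝ E + γ < 2 * m) :
    ∃ C : ℝ≥0, ∀ (C_B : ℝ) (B₀ : ℝ → ℝ), 0 ≤ C_B →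
      (∀ c ∈ Set.Icc (-1 : ℝ) 1, |B₀ c| ≤ C_B * |c|) →
      ∀ (F₁ F₂ : E → ℝ) (M₁ M₂ : ℝ), (∀ u, (1 + ‖u‖ ^ 2) ^ m * |F₁ u| ≤ M₁) →
      (∀ u, (1 + ‖u‖ ^ 2) ^ m * |F₂ u| ≤ M₂) → ∀ v,
        |collisionLoss γ B₀ F₁ F₂ v| ≤
          C * (C_B * M₁ * M₂) * ((1 + ‖v‖) ^ γ * (1 + ‖v‖ ^ 2) ^ (-m)) := by
  have hJ : japaneseIntegral (finrank ℝ E) (m - γ / 2) *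
      (volume : Measure E).toSphere Set.univ ≠ ∞ :=
    ENNReal.mul_ne_top (japaneseIntegral_ne_top (by linarith)) (measure_ne_top _ _)
  lift japaneseIntegral (finrank ℝ E) (m - γ / 2) *
      (volume : Measure E).toSphere Set.univ to ℝ≥0 using hJ with C hC
  refine ⟨C, fun C_B B₀ hCB hB₀ F₁ F₂ M₁ M₂ hF₁ hF₂ v ↦ ?_⟩
  have hM₁ := nonneg_of_rpow_mul_abs_le hF₁
  have hM₂ := nonneg_of_rpow_mul_abs_le hF₂
  have hw := lintegral_toSphere_norm_sub_rpow_mul_rpow_neg_le (E := E) hγ0 m v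
  rw [← hC] at hw
  refine (abs_integral_integral_le_of_lintegral_lintegral_le
    (A := C_B * M₁ * (M₂ * (1 + ‖v‖ ^ 2) ^ (-m))) (by positivity) (by positivity)
    (fun vs ω ↦ ?_) hw).trans_eq (by ring)
  rw [abs_mul, abs_mul]
  have hinner : |⟪vs - v, (ω : E)⟫| ≤ ‖vs - v‖ := by
    simpa only [norm_eq_of_mem_sphere, mul_one] using abs_real_inner_le_norm (vs - v) (ω : E)
  calc _ ≤ C_B * ‖vs - v‖ ^ γ * (M₁ * (1 + ‖vs‖ ^ 2) ^ (-m)) * (M₂ * (1 + ‖v‖ ^ 2) ^ (-m)) := by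
        gcongr
        · refine (abs_collisionKernel_le hγ1 hCB hB₀ v vs (norm_eq_of_mem_sphere ω)).trans ?_
          gcongr
        · exact abs_le_mul_rpow_neg_of_rpow_mul_abs_le hF₁ _
        · exact abs_le_mul_rpow_neg_of_rpow_mul_abs_le hF₂ _
    _ = _ := by ring

theorem collision_operator_weighted_bound_general [Nontrivial E] {γ C_B ℓ : ℝ} (hγ0 : 0 ≤ γ)
    (hγ1 : γ ≤ 1) (hCB : 0 ≤ C_B) (hℓ : finrank ℝ E + γ < ℓ) :
    ∃ C > 0, ∀ B₀ : ℝ → ℝ, Measurable B₀ →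
      (∀ c ∈ Set.Icc (-1 : ℝ) 1, |B₀ c| ≤ C_B * |c|) →
      ∀ F₁ F₂ : E → ℝ, Measurable F₁ → Measurable F₂ → ∀ M₁ M₂ : ℝ,
      (∀ u, (1 + ‖u‖ ^ 2) ^ (ℓ / 2) * |F₁ u| ≤ M₁) →
      (∀ u, (1 + ‖u‖ ^ 2) ^ (ℓ / 2) * |F₂ u| ≤ M₂) → ∀ v,
        |collisionGain γ B₀ F₁ F₂ v| + |collisionLoss γ B₀ F₁ F₂ v| ≤
          C * (1 + ‖v‖) ^ γ * (1 + ‖v‖ ^ 2) ^ (-ℓ / 2) * M₁ * M₂ := by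
  have hm : finrank ℝ E + γ < 2 * (ℓ / 2) := by rwa [mul_div_cancel₀ ℓ two_ne_zero]
  obtain ⟨Cg, hgain⟩ := exists_abs_collisionGain_le (E := E) hγ0 hγ1 hm
  obtain ⟨Cl, hloss⟩ := exists_abs_collisionLoss_le (E := E) hγ0 hγ1 hm
  refine ⟨(Cg + Cl) * C_B + 1, by positivity, fun B₀ _ hB₀ F₁ F₂ _ _ M₁ M₂ hF₁ hF₂ v ↦ ?_⟩
  have hM₁ := nonneg_of_rpow_mul_abs_le hF₁
  have hM₂ := nonneg_of_rpow_mul_abs_le hF₂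
  have hrest : 0 ≤ (1 + ‖v‖) ^ γ * (1 + ‖v‖ ^ 2) ^ (-(ℓ / 2)) * M₁ * M₂ := by positivity
  rw [neg_div]
  linarith [hgain C_B B₀ hCB hB₀ F₁ F₂ M₁ M₂ hF₁ hF₂ v, hloss C_B B₀ hCB hB₀ F₁ F₂ M₁ M₂ hF₁ hF₂ v]

end Collision

/-- Weighted `L^∞` bound on the gain and loss parts of the Boltzmann collision
operator (hard potentials, Grad cutoff, weight `w^ℓ(v) = (1+|v|²)^{ℓ/2}` with
`ℓ > 4`): there is `C > 0`, depending only on `γ`, `ℓ`, `C_B`, with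
`|Q₊(F₁,F₂)(v)| + |Q₋(F₁,F₂)(v)|
  ≤ C (1+|v|)^γ (1+|v|²)^{−ℓ/2} ‖w^ℓ F₁‖_{L^∞} ‖w^ℓ F₂‖_{L^∞}`. -/
theorem collision_operator_weighted_bound
    (γ C_B ℓ : ℝ) (hγ0 : 0 ≤ γ) (hγ1 : γ ≤ 1) (hCB : 0 ≤ C_B) (hℓ : 4 < ℓ) :
    ∃ C > 0, ∀ B₀ : ℝ → ℝ, Measurable B₀ →
      (∀ c ∈ Set.Icc (-1 : ℝ) 1, 0 ≤ B₀ c ∧ B₀ c ≤ C_B * |c|) →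
      ∀ F₁ F₂ : EuclideanSpace ℝ (Fin 3) → ℝ, Measurable F₁ → Measurable F₂ →
      ∀ M₁ M₂ : ℝ,
      (∀ u : EuclideanSpace ℝ (Fin 3), (1 + ‖u‖ ^ 2) ^ (ℓ / 2) * |F₁ u| ≤ M₁) →
      (∀ u : EuclideanSpace ℝ (Fin 3), (1 + ‖u‖ ^ 2) ^ (ℓ / 2) * |F₂ u| ≤ M₂) →
      ∀ v : EuclideanSpace ℝ (Fin 3),
        |∫ vs : EuclideanSpace ℝ (Fin 3),
            ∫ ω : sphere (0 : EuclideanSpace ℝ (Fin 3)) 1,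
              ‖v - vs‖ ^ γ * B₀ (⟪(ω : EuclideanSpace ℝ (Fin 3)), v - vs⟫ / ‖v - vs‖) *
                F₁ (vs - ⟪vs - v, (ω : EuclideanSpace ℝ (Fin 3))⟫ •
                      (ω : EuclideanSpace ℝ (Fin 3))) *
                F₂ (v + ⟪vs - v, (ω : EuclideanSpace ℝ (Fin 3))⟫ •
                      (ω : EuclideanSpace ℝ (Fin 3)))
              ∂((volume : Measure (EuclideanSpace ℝ (Fin 3))).toSphere)|
        + |∫ vs : EuclideanSpace ℝ (Fin 3),
            ∫ ω : sphere (0 : EuclideanSpace ℝ (Fin 3)) 1,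
              ‖v - vs‖ ^ γ * B₀ (⟪(ω : EuclideanSpace ℝ (Fin 3)), v - vs⟫ / ‖v - vs‖) *
                F₁ vs * F₂ v
              ∂((volume : Measure (EuclideanSpace ℝ (Fin 3))).toSphere)|
        ≤ C * (1 + ‖v‖) ^ γ * (1 + ‖v‖ ^ 2) ^ (-ℓ / 2) * M₁ * M₂ := by
  obtain ⟨C, hC, hbound⟩ := collision_operator_weighted_bound_general
    (E := EuclideanSpace ℝ (Fin 3)) hγ0 hγ1 hCB (ℓ := ℓ)
    (by rw [finrank_euclideanSpace_fin]; push_cast; linarith)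
  exact ⟨C, hC, fun B₀ hB₀ hB₀C ↦
    hbound B₀ hB₀ fun c hc ↦ (abs_of_nonneg (hB₀C c hc).1).trans_le (hB₀C c hc).2⟩
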